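/- Let n ≥ 3 and let M : Fin n → Fin n → Bool be an absorbing state of the binary trust gossip model. Then no agent can have both a mutual trust relation and an outgoing one-way trust relation: there do not exist agents i, j, k with i ≠ j, i ≠ k, j ≠ k such that i ∼ j and i ▷ k. -/

import Mathlib

/-- A state `M` is absorbing if for all pairwise distinct agents `a z y`,
if `z` trusts `a` then `z` already agrees with `a` about `y`. -/
def Absorbing {n : ℕ} (M : Fin n → Fin n → Bool) : Prop :=
  ∀ a z y : Fin n, a ≠ z → a ≠ y → z ≠ y → M z a = true → M z y = M a y

/-- The right Euclidean property of a relation, restricted to pairwise distinct triples because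
the diagonal of a trust relation carries no information. It is the half of absorption saying that
whoever I trust already trusts everyone else I trust. -/
def OffDiagRightEuclidean {α : Type*} (r : α → α → Prop) : Prop :=
  ∀ ⦃a b c : α⦄, a ≠ b → a ≠ c → b ≠ c → r a b → r a c → r b c

theorem Absorbing.offDiagRightEuclidean {n : ℕ} {M : Fin n → Fin n → Bool} (habs : Absorbing M) :
    OffDiagRightEuclidean fun i j ↦ M i j = true :=
  fun a b c hab hac hbc trust_ab trust_ac ↦
    (habs b a c hab.symm hbc hac trust_ab).symm.trans trust_ac

theorem no_mutual_and_oneway_general {α : Type*} {r : α → α → Prop}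
    (hr : OffDiagRightEuclidean r) :
    ¬ ∃ i j k : α, i ≠ j ∧ i ≠ k ∧ j ≠ k ∧ (r i j ∧ r j i) ∧ (r i k ∧ ¬ r k i) := by
  rintro ⟨i, j, k, hij, hik, hjk, ⟨r_ij, r_ji⟩, r_ik, not_r_ki⟩
  have r_jk : r j k := hr hij hik hjk r_ij r_ik
  have r_ki : r k i := hr hjk hij.symm hik.symm r_jk r_ji
  exact not_r_ki r_ki

/-- In an absorbing state, no agent has both a mutual trust relation and an
outgoing one-way trust relation. -/
theorem no_mutual_and_oneway {n : ℕ} (hn : 3 ≤ n) (M : Fin n → Fin n → Bool)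
    (hdiag : ∀ i, M i i = false) (habs : Absorbing M) :
    ¬ ∃ i j k : Fin n, i ≠ j ∧ i ≠ k ∧ j ≠ k ∧
      (M i j = true ∧ M j i = true) ∧ (M i k = true ∧ M k i = false) := by
  simpa only [Bool.not_eq_true] using no_mutual_and_oneway_general habs.offDiagRightEuclidean
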